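/- Let T > 0, let Ω_T = (0,1) × (0,T) and Ω̃_T = (−1,2) × (−T,2T), let u be continuous on [0,1] × [0,T] with finite parabolic BMO norm on Ω_T, and let ũ be the reflection extension of u, extended by 0 outside Ω̃_T. Let Ψ ∈ C_c^∞(ℝ²) with 0 ≤ Ψ ≤ 1, Ψ = 1 on Z₁ = (−1/4, 5/4) × (−T/4, 5T/4), and Ψ = 0 on ℝ² ∖ Z₂ where Z₂ = (−3/4, 7/4) × (−3T/4, 7T/4). Then there exists a constant C > 0 depending only on T and Ψ such that ‖Ψũ‖_{BMOₚ(ℝ²)} ≤ C (‖u‖_{BMOₚ(Ω_T)} + ‖u‖_{L¹(Ω_T)}). -/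

import Mathlib

open MeasureTheory Real
open scoped ENNReal

noncomputable section

/-- The parabolic distance `‖z‖ₚ = max |x| √|t|` from `z = (x,t) ∈ ℝ²` to the origin. -/
def pnorm2 (z : ℝ × ℝ) : ℝ := max |z.1| (Real.sqrt |z.2|)

/-- The parabolic cube of radius `r` centered at `z₀` in `ℝ²`. -/
def pCube2 (z₀ : ℝ × ℝ) (r : ℝ) : Set (ℝ × ℝ) := {z | pnorm2 (z - z₀) < r}

/-- The set of mean oscillations `⨍_Q |u - u_Q|` of `u` over parabolic cubes `Q ⊆ O`. -/
def oscSet2 (O : Set (ℝ × ℝ)) (u : ℝ × ℝ → ℝ) : Set ℝ :=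
  {v | ∃ z₀ r, 0 < r ∧ pCube2 z₀ r ⊆ O ∧
    v = ⨍ z in pCube2 z₀ r, |u z - ⨍ w in pCube2 z₀ r, u w|}

/-- The parabolic BMO norm of `u` over `O ⊆ ℝ²`. -/
def pBMO2 (O : Set (ℝ × ℝ)) (u : ℝ × ℝ → ℝ) : ℝ := sSup (oscSet2 O u)

/-- `log⁺ x = max (log x) 0`. -/
def logPlus (x : ℝ) : ℝ := max (Real.log x) 0

/-- The domain `Ω_T = (0,1) × (0,T)`. -/
def Omega (T : ℝ) : Set (ℝ × ℝ) := Set.Ioo (0 : ℝ) 1 ×ˢ Set.Ioo (0 : ℝ) T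

/-- The domain `Ω̂_T = (-1,2) × (0,T)`. -/
def OmegaHat (T : ℝ) : Set (ℝ × ℝ) := Set.Ioo (-1 : ℝ) 2 ×ˢ Set.Ioo (0 : ℝ) T

/-- The domain `Ω̃_T = (-1,2) × (-T,2T)`. -/
def OmegaTilde (T : ℝ) : Set (ℝ × ℝ) := Set.Ioo (-1 : ℝ) 2 ×ˢ Set.Ioo (-T) (2 * T)

/-- The spatial reflection extension of `u` from `[0,1]` to `(-1,2)` (in the `x` variable). -/
def extSpace (u : ℝ × ℝ → ℝ) : ℝ × ℝ → ℝ := fun p =>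
  if p.1 < 0 then -3 * u (-p.1, p.2) + 4 * u (-p.1 / 2, p.2)
  else if 1 < p.1 then -3 * u (2 - p.1, p.2) + 4 * u ((3 - p.1) / 2, p.2)
  else u p

/-- The temporal reflection extension from `[0,T]` to `(-T,2T)` (in the `t` variable). -/
def extTime (T : ℝ) (v : ℝ × ℝ → ℝ) : ℝ × ℝ → ℝ := fun p =>
  if p.2 < 0 then v (p.1, -p.2)
  else if T < p.2 then v (p.1, 2 * T - p.2)
  else v p

/-- The reflection extension `ũ` of `u` from `Ω_T` to `Ω̃_T = (-1,2) × (-T,2T)`. -/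
def uext (T : ℝ) (u : ℝ × ℝ → ℝ) : ℝ × ℝ → ℝ := extTime T (extSpace u)

/-- The reflection extension `ũ`, extended by `0` outside `Ω̃_T`. -/
def uextZ (T : ℝ) (u : ℝ × ℝ → ℝ) : ℝ × ℝ → ℝ :=
  (OmegaTilde T).indicator (uext T u)

/-- The partial derivative `u_x`. -/
def Dx2 (u : ℝ × ℝ → ℝ) : ℝ × ℝ → ℝ := fun p => fderiv ℝ u p (1, 0)

/-- The partial derivative `u_t`. -/
def Dt2 (u : ℝ × ℝ → ℝ) : ℝ × ℝ → ℝ := fun p => fderiv ℝ u p (0, 1)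

/-- The `L²(O)` norm. -/
def L2norm2 (O : Set (ℝ × ℝ)) (v : ℝ × ℝ → ℝ) : ℝ :=
  (eLpNorm v 2 (volume.restrict O)).toReal

/-- The parabolic Sobolev norm
`‖u‖_{W₂^{2,1}(O)} = ‖u‖_{L²} + ‖u_x‖_{L²} + ‖u_{xx}‖_{L²} + ‖u_t‖_{L²}`. -/
def W21norm (O : Set (ℝ × ℝ)) (u : ℝ × ℝ → ℝ) : ℝ :=
  L2norm2 O u + L2norm2 O (Dx2 u) + L2norm2 O (Dx2 (Dx2 u)) + L2norm2 O (Dt2 u)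

lemma pCube2_eq (z : ℝ × ℝ) (r : ℝ) (hr : 0 < r) :
    pCube2 z r = Set.Ioo (z.1 - r) (z.1 + r) ×ˢ Set.Ioo (z.2 - r ^ 2) (z.2 + r ^ 2) := by
  ext p
  simp only [pCube2, pnorm2, Set.mem_ofPred_eq, max_lt_iff, Real.sqrt_lt' hr, abs_lt,
    Set.mem_prod, Set.mem_Ioo, Prod.fst_sub, Prod.snd_sub]
  constructor
  · rintro ⟨⟨h1, h2⟩, h3, h4⟩
    refine ⟨⟨?_, ?_⟩, ?_, ?_⟩ <;> linarith
  · rintro ⟨⟨h1, h2⟩, h3, h4⟩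
    refine ⟨⟨?_, ?_⟩, ?_, ?_⟩ <;> linarith

lemma pCube2_meas (z : ℝ × ℝ) (r : ℝ) (hr : 0 < r) : MeasurableSet (pCube2 z r) := by
  rw [pCube2_eq z r hr]; exact measurableSet_Ioo.prod measurableSet_Ioo

lemma pCube2_vol (z : ℝ × ℝ) (r : ℝ) (hr : 0 < r) : volume.real (pCube2 z r) = 4 * r ^ 3 := by
  rw [pCube2_eq z r hr, Measure.real, Measure.volume_eq_prod, Measure.prod_prod, Real.volume_Ioo,
    Real.volume_Ioo, ENNReal.toReal_mul, ENNReal.toReal_ofReal (by linarith),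
    ENNReal.toReal_ofReal (by nlinarith [sq_nonneg r])]
  ring

lemma pCube2_fin (z : ℝ × ℝ) (r : ℝ) (hr : 0 < r) : volume (pCube2 z r) ≠ ⊤ := by
  intro h
  have := pCube2_vol z r hr
  rw [Measure.real, h] at this
  have h3 : 0 < r ^ 3 := by positivity
  simp at this
  linarith

lemma box_int (f : ℝ × ℝ → ℝ) (hf : Continuous f) (a b c d : ℝ) :
    IntegrableOn f (Set.Ioo a b ×ˢ Set.Ioo c d) := by
  have h : IntegrableOn f (Set.Icc a b ×ˢ Set.Icc c d) :=
    hf.continuousOn.integrableOn_compact (isCompact_Icc.prod isCompact_Icc)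
  exact h.mono_set (Set.prod_mono Set.Ioo_subset_Icc_self Set.Ioo_subset_Icc_self)

lemma cube_int (f : ℝ × ℝ → ℝ) (hf : Continuous f) (z : ℝ × ℝ) (r : ℝ) (hr : 0 < r) :
    IntegrableOn f (pCube2 z r) := by
  rw [pCube2_eq z r hr]; exact box_int f hf _ _ _ _

lemma avg_eq (f : ℝ × ℝ → ℝ) (z : ℝ × ℝ) (r : ℝ) (hr : 0 < r) :
    (⨍ w in pCube2 z r, f w) = (4 * r ^ 3)⁻¹ * ∫ w in pCube2 z r, f w := by
  rw [setAverage_eq, pCube2_vol z r hr, smul_eq_mul]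

lemma cube_const (c : ℝ) (z : ℝ × ℝ) (r : ℝ) (hr : 0 < r) :
    (∫ _ in pCube2 z r, c) = 4 * r ^ 3 * c := by
  rw [setIntegral_const, pCube2_vol z r hr, smul_eq_mul]

/-- Distance of the mean to a constant. -/
lemma avg_sub_le (f : ℝ × ℝ → ℝ) (hf : Continuous f) (z : ℝ × ℝ) (r : ℝ) (hr : 0 < r) (c : ℝ) :
    |(⨍ w in pCube2 z r, f w) - c| ≤ (4 * r ^ 3)⁻¹ * ∫ w in pCube2 z r, |f w - c| := by
  have hV : 0 < 4 * r ^ 3 := by positivity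
  have h1 : (⨍ w in pCube2 z r, f w) - c = (4 * r ^ 3)⁻¹ * ∫ w in pCube2 z r, (f w - c) := by
    rw [integral_sub (cube_int f hf z r hr) (cube_int _ continuous_const z r hr),
      cube_const c z r hr, avg_eq f z r hr]
    field_simp
  rw [h1, abs_mul, abs_of_pos (inv_pos.2 hV)]
  exact mul_le_mul_of_nonneg_left (abs_integral_le_integral_abs) (inv_pos.2 hV).le

lemma osc_le (f : ℝ × ℝ → ℝ) (hf : Continuous f) (z : ℝ × ℝ) (r : ℝ) (hr : 0 < r) (c : ℝ) :
    (⨍ w in pCube2 z r, |f w - ⨍ w in pCube2 z r, f w|) ≤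
      2 * ((4 * r ^ 3)⁻¹ * ∫ w in pCube2 z r, |f w - c|) := by
  have hV : 0 < 4 * r ^ 3 := by positivity
  have h0 := avg_sub_le f hf z r hr c
  set m := ⨍ w in pCube2 z r, f w
  have h1 : (∫ w in pCube2 z r, |f w - m|) ≤ ∫ w in pCube2 z r, (|f w - c| + |m - c|) := by
    refine setIntegral_mono (cube_int _ (by fun_prop) z r hr) (cube_int _ (by fun_prop) z r hr) ?_
    intro w
    have := abs_sub_le (f w) c m
    rw [abs_sub_comm c m] at this
    exact this
  rw [integral_add (cube_int _ (by fun_prop) z r hr) (cube_int _ (by fun_prop) z r hr),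
    cube_const _ z r hr] at h1
  rw [avg_eq _ z r hr]
  have h2 := mul_le_mul_of_nonneg_left h1 (inv_pos.2 hV).le
  rw [mul_add, inv_mul_cancel_left₀ hV.ne'] at h2
  linarith

/-- The folding map. -/
def foldMap (S k x : ℝ) : ℝ := if x < 0 then -k * x else if S < x then S - k * (x - S) else x

lemma foldMap_eq (S k x : ℝ) (hS : 0 < S) :
    foldMap S k x = max 0 (min x S) + k * max 0 (-x) - k * max 0 (x - S) := by
  unfold foldMap
  split_ifs with h1 h2
  · rw [min_eq_left (by linarith), max_eq_left (by linarith), max_eq_right (by linarith),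
      max_eq_left (by linarith)]; ring
  · rw [min_eq_right (by linarith), max_eq_right (by linarith), max_eq_left (by linarith),
      max_eq_right (by linarith)]; ring
  · rw [min_eq_left (by linarith), max_eq_right (by linarith), max_eq_left (by linarith),
      max_eq_left (by linarith)]; ring

lemma foldMap_cont (S k : ℝ) (hS : 0 < S) : Continuous (foldMap S k) := by
  have : foldMap S k = fun x => max 0 (min x S) + k * max 0 (-x) - k * max 0 (x - S) := by
    ext x; exact foldMap_eq S k x hS
  rw [this]; fun_prop

lemma foldMap_lip (S k x y : ℝ) (hS : 0 < S) (hk : 0 < k) (hk1 : k ≤ 1) :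
    |foldMap S k x - foldMap S k y| ≤ |x - y| := by
  wlog hxy : x ≤ y generalizing x y
  · rw [abs_sub_comm, abs_sub_comm x y]; exact this y x (by linarith)
  rw [abs_of_nonpos (by linarith : x - y ≤ 0), abs_le]
  unfold foldMap
  split_ifs <;> constructor <;> nlinarith

lemma foldMap_mem (S k x : ℝ) (hS : 0 < S) (hk : 0 < k) (hk1 : k ≤ 1)
    (hx : x ∈ Set.Ioo (-S) (2 * S)) : foldMap S k x ∈ Set.Icc 0 S := by
  obtain ⟨h1, h2⟩ := hx
  unfold foldMap
  split_ifs <;> constructor <;> nlinarith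

lemma lint_affine (g : ℝ → ℝ≥0∞) (hg : Measurable g) (a b : ℝ) (ha : a ≠ 0) :
    (∫⁻ x, g (a * x + b)) = ENNReal.ofReal |a⁻¹| * ∫⁻ x, g x := by
  have h1 : (∫⁻ x, g (a * x + b)) = ∫⁻ x, (fun y => g (y + b)) x ∂(Measure.map (a * ·) volume) := by
    have hm : Measurable (fun y => g (y + b)) := hg.comp (by fun_prop)
    rw [lintegral_map hm (by fun_prop)]
  rw [h1, Real.map_volume_mul_left ha, lintegral_smul_measure, smul_eq_mul]
  congr 1
  exact lintegral_add_right_eq_self g b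

lemma fold_lint (S k : ℝ) (hS : 0 < S) (hk : 1 / 2 ≤ k) (hk1 : k ≤ 1) (h : ℝ → ℝ≥0∞)
    (hh : Measurable h) :
    (∫⁻ x in Set.Ioo (-S) (2 * S), h (foldMap S k x)) ≤ 5 * ∫⁻ x in Set.Ioo 0 S, h x := by
  have hk0 : 0 < k := by linarith
  set g : ℝ → ℝ≥0∞ := (Set.Icc 0 S).indicator h with hgdef
  have hg : Measurable g := hh.indicator measurableSet_Icc
  have hgi : (∫⁻ x, g x) = ∫⁻ x in Set.Ioo 0 S, h x := by
    rw [hgdef, lintegral_indicator measurableSet_Icc]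
    exact setLIntegral_congr Ioo_ae_eq_Icc.symm
  have hki : ENNReal.ofReal |(-k)⁻¹| ≤ 2 := by
    rw [inv_neg, abs_neg, abs_of_pos (inv_pos.2 hk0)]
    refine ENNReal.ofReal_le_of_le_toReal ?_
    rw [inv_le_comm₀ hk0 (by norm_num)]
    norm_num; linarith
  calc (∫⁻ x in Set.Ioo (-S) (2 * S), h (foldMap S k x))
      ≤ ∫⁻ x in Set.Ioo (-S) (2 * S), (g (-k * x + 0) + (g (1 * x + 0) + g (-k * x + (S + k * S)))) := by
        refine setLIntegral_mono' measurableSet_Ioo ?_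
        intro x hx
        have hm := foldMap_mem S k x hS hk0 hk1 hx
        have e : h (foldMap S k x) = g (foldMap S k x) := by
          rw [hgdef, Set.indicator_of_mem hm]
        rw [e]
        unfold foldMap
        split_ifs
        · rw [add_zero]; exact le_self_add
        · rw [show S - k * (x - S) = -k * x + (S + k * S) by ring]
          exact le_add_self.trans le_add_self
        · rw [one_mul, add_zero, add_zero]; exact le_self_add.trans le_add_self
    _ ≤ ∫⁻ x, (g (-k * x + 0) + (g (1 * x + 0) + g (-k * x + (S + k * S)))) :=
        setLIntegral_le_lintegral _ _
    _ = ENNReal.ofReal |(-k)⁻¹| * (∫⁻ x, g x) + (ENNReal.ofReal |1⁻¹| * (∫⁻ x, g x) +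
          ENNReal.ofReal |(-k)⁻¹| * (∫⁻ x, g x)) := by
        have m1 : Measurable (fun x => g (-k * x + 0)) := hg.comp (by fun_prop)
        have m2 : Measurable (fun x => g (1 * x + 0)) := hg.comp (by fun_prop)
        rw [lintegral_add_left m1, lintegral_add_left m2,
          lint_affine g hg _ _ (by linarith), lint_affine g hg _ _ (by norm_num),
          lint_affine g hg _ _ (by linarith)]
    _ ≤ 2 * (∫⁻ x, g x) + (1 * (∫⁻ x, g x) + 2 * (∫⁻ x, g x)) := by
        gcongr; simp
    _ = 5 * ∫⁻ x, g x := by ring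
    _ = _ := by rw [hgi]

/-- The two-dimensional folding map. -/
def foldG (T k : ℝ) (z : ℝ × ℝ) : ℝ × ℝ := (foldMap 1 k z.1, foldMap T 1 z.2)

lemma foldG_cont (T k : ℝ) (hT : 0 < T) : Continuous (foldG T k) :=
  ((foldMap_cont 1 k one_pos).comp continuous_fst).prodMk
    ((foldMap_cont T 1 hT).comp continuous_snd)

lemma foldG_lint (T k : ℝ) (hT : 0 < T) (hk : 1 / 2 ≤ k) (hk1 : k ≤ 1) (h : ℝ × ℝ → ℝ≥0∞)
    (hh : Measurable h) :
    (∫⁻ z in OmegaTilde T, h (foldG T k z)) ≤ 25 * ∫⁻ z in Omega T, h z := by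
  have hc := foldG_cont T k hT
  have hc1 := foldMap_cont 1 k one_pos
  have hA : Measurable (fun x => ∫⁻ y in Set.Ioo 0 T, h (x, y)) := by
    exact hh.lintegral_prod_right'
  unfold OmegaTilde Omega
  rw [Measure.volume_eq_prod, ← Measure.prod_restrict, ← Measure.prod_restrict,
    lintegral_prod (fun z => h (foldG T k z)) (hh.comp hc.measurable).aemeasurable,
    lintegral_prod _ hh.aemeasurable]
  calc (∫⁻ x in Set.Ioo (-1 : ℝ) 2, ∫⁻ y in Set.Ioo (-T) (2 * T), h (foldG T k (x, y)))
      ≤ ∫⁻ x in Set.Ioo (-1 : ℝ) 2, 5 * ∫⁻ y in Set.Ioo 0 T, h (foldMap 1 k x, y) := by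
        refine lintegral_mono (fun x => ?_)
        exact fold_lint T 1 hT (by norm_num) le_rfl (fun y => h (foldMap 1 k x, y))
          (hh.comp (by fun_prop))
    _ = 5 * ∫⁻ x in Set.Ioo (-1 : ℝ) (2 * 1), ∫⁻ y in Set.Ioo 0 T, h (foldMap 1 k x, y) := by
        rw [mul_one, lintegral_const_mul]
        exact hA.comp hc1.measurable
    _ ≤ 5 * (5 * ∫⁻ x in Set.Ioo (0 : ℝ) 1, ∫⁻ y in Set.Ioo 0 T, h (x, y)) := by
        gcongr
        exact fold_lint 1 k one_pos hk hk1 (fun x => ∫⁻ y in Set.Ioo 0 T, h (x, y)) hA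
    _ = _ := by rw [← mul_assoc]; norm_num

lemma foldG_int (T k : ℝ) (hT : 0 < T) (hk : 1 / 2 ≤ k) (hk1 : k ≤ 1) (w : ℝ × ℝ → ℝ)
    (hw : Continuous w) (hw0 : ∀ z, 0 ≤ w z) (P R : Set (ℝ × ℝ)) (hP : MeasurableSet P)
    (hR : MeasurableSet R) (hPO : P ⊆ OmegaTilde T) (hPR : ∀ z ∈ P, foldG T k z ∈ R)
    (hi : IntegrableOn w R) :
    (∫ z in P, w (foldG T k z)) ≤ 25 * ∫ z in R, w z := by
  have hc := foldG_cont T k hT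
  have h0 : 0 ≤ ∫ z in R, w z := integral_nonneg hw0
  rw [integral_eq_lintegral_of_nonneg_ae (Filter.Eventually.of_forall (fun z => hw0 _))
    (hw.comp hc).aestronglyMeasurable]
  refine ENNReal.toReal_le_of_le_ofReal (by positivity) ?_
  rw [ENNReal.ofReal_mul (by norm_num),
    ofReal_integral_eq_lintegral_ofReal hi (Filter.Eventually.of_forall hw0)]
  set h : ℝ × ℝ → ℝ≥0∞ := R.indicator (fun z => ENNReal.ofReal (w z)) with hh
  have hhm : Measurable h := hw.measurable.ennreal_ofReal.indicator hR
  calc (∫⁻ z in P, ENNReal.ofReal (w (foldG T k z)))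
      ≤ ∫⁻ z in P, h (foldG T k z) := by
        refine setLIntegral_mono' hP (fun z hz => ?_)
        rw [hh, Set.indicator_of_mem (hPR z hz)]
    _ ≤ ∫⁻ z in OmegaTilde T, h (foldG T k z) := lintegral_mono_set hPO
    _ ≤ 25 * ∫⁻ z in Omega T, h z := foldG_lint T k hT hk hk1 h hhm
    _ ≤ 25 * ∫⁻ z, h z := by gcongr; exact Measure.restrict_le_self
    _ = _ := by rw [hh, lintegral_indicator hR]; norm_num

lemma clamp_exists (S r y : ℝ) (hr : 2 * r ≤ S) (hy : y ∈ Set.Icc 0 S) :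
    ∃ y', 0 ≤ y' - r ∧ y' + r ≤ S ∧
      ∀ x, |x - y| ≤ r → x ∈ Set.Icc 0 S → x ∈ Set.Icc (y' - r) (y' + r) := by
  obtain ⟨h1, h2⟩ := hy
  by_cases ha : y < r
  · refine ⟨r, by linarith, by linarith, fun x hx hx' => ?_⟩
    rw [abs_le] at hx
    exact ⟨by linarith [hx'.1], by linarith⟩
  by_cases hb : S - r < y
  · refine ⟨S - r, by linarith, by linarith, fun x hx hx' => ?_⟩
    rw [abs_le] at hx
    exact ⟨by linarith, by linarith [hx'.2]⟩
  · refine ⟨y, by linarith, by linarith, fun x hx hx' => ?_⟩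
    rw [abs_le] at hx
    exact ⟨by linarith, by linarith⟩

lemma cube_closed (w : ℝ × ℝ → ℝ) (z : ℝ × ℝ) (r : ℝ) (hr : 0 < r) :
    (∫ p in Set.Icc (z.1 - r) (z.1 + r) ×ˢ Set.Icc (z.2 - r ^ 2) (z.2 + r ^ 2), w p) =
      ∫ p in pCube2 z r, w p := by
  rw [pCube2_eq z r hr]
  refine setIntegral_congr_set ?_
  rw [Measure.volume_eq_prod]
  exact (Measure.set_prod_ae_eq Ioo_ae_eq_Icc Ioo_ae_eq_Icc).symm

/-- Oscillation of a folded function. -/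
lemma fold_osc (T k : ℝ) (hT : 0 < T) (hk : 1 / 2 ≤ k) (hk1 : k ≤ 1) (w : ℝ × ℝ → ℝ)
    (hw : Continuous w) (hB : BddAbove (oscSet2 (Omega T) w)) (z : ℝ × ℝ) (r : ℝ) (hr : 0 < r)
    (hr1 : 2 * r ≤ 1) (hr2 : 2 * r ^ 2 ≤ T) (hz : pCube2 z r ⊆ OmegaTilde T) :
    ∃ c, (∫ p in pCube2 z r, |w (foldG T k p) - c|) ≤ 25 * (4 * r ^ 3 * pBMO2 (Omega T) w) := by
  have hk0 : 0 < k := by linarith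
  have hmem : ∀ p ∈ OmegaTilde T, foldMap 1 k p.1 ∈ Set.Icc (0 : ℝ) 1 ∧
      foldMap T 1 p.2 ∈ Set.Icc (0 : ℝ) T := by
    rintro p ⟨h1, h2⟩
    exact ⟨foldMap_mem 1 k _ one_pos hk0 hk1 (by rw [mul_one]; exact h1),
      foldMap_mem T 1 _ hT one_pos le_rfl h2⟩
  have hzz : z ∈ pCube2 z r := by
    rw [pCube2_eq z r hr]
    have : 0 < r ^ 2 := by positivity
    exact ⟨⟨by linarith, by linarith⟩, by linarith, by linarith⟩
  obtain ⟨x', hx1, hx2, hx3⟩ := clamp_exists 1 r (foldMap 1 k z.1) hr1 (hmem z (hz hzz)).1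
  obtain ⟨t', ht1, ht2, ht3⟩ := clamp_exists T (r ^ 2) (foldMap T 1 z.2) hr2 (hmem z (hz hzz)).2
  have hsub : pCube2 (x', t') r ⊆ Omega T := by
    rw [pCube2_eq _ r hr]
    rintro p ⟨⟨h1, h2⟩, h3, h4⟩
    simp only at h1 h2 h3 h4
    exact ⟨⟨by linarith, by linarith⟩, by linarith, by linarith⟩
  set c := ⨍ p in pCube2 (x', t') r, w p with hc
  refine ⟨c, ?_⟩
  have hosc : (⨍ p in pCube2 (x', t') r, |w p - c|) ≤ pBMO2 (Omega T) w :=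
    le_csSup hB ⟨(x', t'), r, hr, hsub, rfl⟩
  rw [avg_eq _ _ r hr] at hosc
  have hV : 0 < 4 * r ^ 3 := by positivity
  rw [inv_mul_le_iff₀ hV] at hosc
  refine le_trans ?_ (mul_le_mul_of_nonneg_left hosc (by norm_num))
  rw [← cube_closed _ (x', t') r hr]
  refine foldG_int T k hT hk hk1 (fun p => |w p - c|) (by fun_prop) (fun p => abs_nonneg _)
    (pCube2 z r) _ (pCube2_meas z r hr) (measurableSet_Icc.prod measurableSet_Icc) hz ?_ ?_
  · intro p hp
    have hm := hmem p (hz hp)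
    rw [pCube2_eq z r hr] at hp
    obtain ⟨⟨h1, h2⟩, h3, h4⟩ := hp
    refine ⟨hx3 _ ?_ hm.1, ht3 _ ?_ hm.2⟩
    · refine (foldMap_lip 1 k _ _ one_pos hk0 hk1).trans ?_
      rw [abs_le]; constructor <;> linarith
    · refine (foldMap_lip T 1 _ _ hT one_pos le_rfl).trans ?_
      rw [abs_le]; constructor <;> linarith
  · exact (Continuous.continuousOn (by fun_prop)).integrableOn_compact
      (isCompact_Icc.prod isCompact_Icc)

lemma uext_eq (T : ℝ) (u : ℝ × ℝ → ℝ) (z : ℝ × ℝ) :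
    uext T u z = -3 * u (foldG T 1 z) + 4 * u (foldG T (1 / 2) z) := by
  have h1 : ∀ t : ℝ, extSpace u (z.1, t) =
      -3 * u (foldMap 1 1 z.1, t) + 4 * u (foldMap 1 (1 / 2) z.1, t) := by
    intro t
    unfold extSpace foldMap
    simp only
    split_ifs
    · ring_nf
    · ring_nf
    · ring
  have h2 : uext T u z = extSpace u (z.1, foldMap T 1 z.2) := by
    unfold uext extTime foldMap
    split_ifs
    · ring_nf
    · ring_nf
    · rfl
  rw [h2, h1]
  rfl

/-- Everything needed about the extension. -/
lemma uext_props (T : ℝ) (hT : 0 < T) (w : ℝ × ℝ → ℝ) (hw : Continuous w) :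
    Continuous (uext T w) ∧ (∫ z in OmegaTilde T, |uext T w z|) ≤ 175 * ∫ z in Omega T, |w z| := by
  have hc1 := foldG_cont T 1 hT
  have hc2 := foldG_cont T (1 / 2) hT
  have he : uext T w = fun z => -3 * w (foldG T 1 z) + 4 * w (foldG T (1 / 2) z) := by
    ext z; exact uext_eq T w z
  have hcont : Continuous (uext T w) := by rw [he]; fun_prop
  refine ⟨hcont, ?_⟩
  have hmO : MeasurableSet (OmegaTilde T) := measurableSet_Ioo.prod measurableSet_Ioo
  have key : ∀ k : ℝ, 1 / 2 ≤ k → k ≤ 1 →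
      (∫ z in OmegaTilde T, |w (foldG T k z)|) ≤ 25 * ∫ z in Omega T, |w z| := by
    intro k hk hk1
    have e : (∫ z in Omega T, |w z|) = ∫ z in Set.Icc (0:ℝ) 1 ×ˢ Set.Icc (0:ℝ) T, |w z| := by
      refine setIntegral_congr_set ?_
      rw [Measure.volume_eq_prod]
      exact Measure.set_prod_ae_eq Ioo_ae_eq_Icc Ioo_ae_eq_Icc
    rw [e]
    refine foldG_int T k hT hk hk1 (fun z => |w z|) (by fun_prop) (fun z => abs_nonneg _) _ _ hmO
      (measurableSet_Icc.prod measurableSet_Icc) subset_rfl ?_ ?_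
    · rintro p ⟨h1, h2⟩
      exact ⟨foldMap_mem 1 k _ one_pos (by linarith) hk1 (by rw [mul_one]; exact h1),
        foldMap_mem T 1 _ hT one_pos le_rfl h2⟩
    · exact (Continuous.continuousOn (by fun_prop)).integrableOn_compact
        (isCompact_Icc.prod isCompact_Icc)
  have i : ∀ f : ℝ × ℝ → ℝ, Continuous f → IntegrableOn f (OmegaTilde T) :=
    fun f hf => box_int f hf _ _ _ _
  have hle : (∫ z in OmegaTilde T, |uext T w z|) ≤
      ∫ z in OmegaTilde T, (3 * |w (foldG T 1 z)| + 4 * |w (foldG T (1 / 2) z)|) := by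
    refine setIntegral_mono (i _ (by fun_prop)) (i _ (by fun_prop)) (fun z => ?_)
    simp only [he]
    refine (abs_add_le _ _).trans ?_
    rw [abs_mul, abs_mul]; norm_num
  rw [integral_add (i _ (by fun_prop)) (i _ (by fun_prop)), integral_const_mul,
    integral_const_mul] at hle
  linarith [key 1 (by norm_num) le_rfl, key (1 / 2) le_rfl (by norm_num)]

lemma uext_osc (T : ℝ) (hT : 0 < T) (w : ℝ × ℝ → ℝ)
    (hw : Continuous w) (hB : BddAbove (oscSet2 (Omega T) w)) (z : ℝ × ℝ) (r : ℝ) (hr : 0 < r)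
    (hr1 : 2 * r ≤ 1) (hr2 : 2 * r ^ 2 ≤ T) (hz : pCube2 z r ⊆ OmegaTilde T) :
    (⨍ p in pCube2 z r, |uext T w p - ⨍ q in pCube2 z r, uext T w q|) ≤
      350 * pBMO2 (Omega T) w := by
  have hcu := (uext_props T hT w hw).1
  have hc1 := foldG_cont T 1 hT
  have hc2 := foldG_cont T (1 / 2) hT
  obtain ⟨a, ha⟩ := fold_osc T 1 hT (by norm_num) le_rfl w hw hB z r hr hr1 hr2 hz
  obtain ⟨b, hb⟩ := fold_osc T (1 / 2) hT le_rfl (by norm_num) w hw hB z r hr hr1 hr2 hz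
  refine (osc_le _ hcu z r hr (-3 * a + 4 * b)).trans ?_
  have hV : 0 < 4 * r ^ 3 := by positivity
  have i : ∀ f : ℝ × ℝ → ℝ, Continuous f → IntegrableOn f (pCube2 z r) :=
    fun f hf => cube_int f hf _ _ hr
  have hle : (∫ p in pCube2 z r, |uext T w p - (-3 * a + 4 * b)|) ≤
      ∫ p in pCube2 z r, (3 * |w (foldG T 1 p) - a| + 4 * |w (foldG T (1 / 2) p) - b|) := by
    refine setIntegral_mono (i _ (by fun_prop)) (i _ (by fun_prop)) (fun p => ?_)
    simp only [uext_eq]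
    rw [show -3 * w (foldG T 1 p) + 4 * w (foldG T (1 / 2) p) - (-3 * a + 4 * b) =
      -3 * (w (foldG T 1 p) - a) + 4 * (w (foldG T (1 / 2) p) - b) by ring]
    refine (abs_add_le _ _).trans ?_
    rw [abs_mul, abs_mul]; norm_num
  rw [integral_add (i _ (by fun_prop)) (i _ (by fun_prop)), integral_const_mul,
    integral_const_mul] at hle
  have : (4 * r ^ 3)⁻¹ * (∫ p in pCube2 z r, |uext T w p - (-3 * a + 4 * b)|) ≤
      175 * pBMO2 (Omega T) w := by
    rw [inv_mul_le_iff₀ hV]; linarith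
  linarith

lemma cube_mono (z : ℝ × ℝ) (r s : ℝ) (h : r ≤ s) : pCube2 z r ⊆ pCube2 z s :=
  fun _ hp => lt_of_lt_of_le hp h

lemma telescope (v : ℝ × ℝ → ℝ) (hv : Continuous v) (z : ℝ × ℝ) (r0 A E : ℝ) (h0 : 0 < r0)
    (h1 : r0 ≤ 1) (hA : 0 ≤ A) (hE : 0 ≤ E)
    (hosc : ∀ r, 0 < r → r ≤ r0 → (⨍ p in pCube2 z r, |v p - ⨍ q in pCube2 z r, v q|) ≤ A)
    (hIbd : ∀ r, 0 < r → r ≤ r0 → (∫ p in pCube2 z r, |v p|) ≤ E) (n : ℕ) :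
    ∀ r, 0 < r → r ≤ r0 → r0 < 2 ^ (n + 1) * r →
      r * |⨍ q in pCube2 z r, v q| ≤ E / r0 ^ 2 + 16 * A := by
  have base : ∀ r, 0 < r → r ≤ r0 → r0 < 2 * r →
      r * |⨍ q in pCube2 z r, v q| ≤ E / r0 ^ 2 + 16 * A := by
    intro r hr hr0 hlt
    have h := avg_sub_le v hv z r hr 0
    simp only [sub_zero] at h
    have hV : 0 < 4 * r ^ 3 := by positivity
    have h2 := h.trans (mul_le_mul_of_nonneg_left (hIbd r hr hr0) (inv_pos.2 hV).le)
    have h3 := mul_le_mul_of_nonneg_left h2 hr.le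
    have h4 : r * ((4 * r ^ 3)⁻¹ * E) = E / (4 * r ^ 2) := by field_simp
    have h5 : E / (4 * r ^ 2) ≤ E / r0 ^ 2 := by
      gcongr; nlinarith
    linarith
  induction n with
  | zero => intro r hr hr0 hlt; exact base r hr hr0 (by simpa using hlt)
  | succ n ih =>
    intro r hr hr0 hlt
    by_cases hc : r0 < 2 * r
    · exact base r hr hr0 hc
    push Not at hc
    have hh := ih (2 * r) (by positivity) hc (by rw [pow_succ] at hlt; linarith)
    have ho := hosc (2 * r) (by positivity) hc
    set c := ⨍ q in pCube2 z (2 * r), v q with hcdef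
    have h2r : 0 < 2 * r := by positivity
    rw [avg_eq _ z (2 * r) h2r, inv_mul_le_iff₀ (by positivity)] at ho
    have hd := avg_sub_le v hv z r hr c
    have hm : (∫ w in pCube2 z r, |v w - c|) ≤ ∫ w in pCube2 z (2 * r), |v w - c| := by
      refine setIntegral_mono_set (cube_int _ (by fun_prop) z _ h2r)
        (Filter.Eventually.of_forall fun _ => abs_nonneg _)
        (Filter.Eventually.of_forall (cube_mono z r (2 * r) (by linarith)))
    have hd2 : (4 * r ^ 3)⁻¹ * (∫ w in pCube2 z r, |v w - c|) ≤ 8 * A := by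
      rw [inv_mul_le_iff₀ (by positivity)]
      refine hm.trans (ho.trans (le_of_eq ?_))
      ring
    have h6 : |⨍ q in pCube2 z r, v q| ≤ |c| + 8 * A := by
      have := abs_sub_abs_le_abs_sub (⨍ q in pCube2 z r, v q) c
      linarith
    have h7 := mul_le_mul_of_nonneg_left h6 hr.le
    have h8 : r * (8 * A) ≤ 8 * A := by nlinarith
    have h9 : 0 ≤ E / r0 ^ 2 := by positivity
    nlinarith

lemma telescope' (v : ℝ × ℝ → ℝ) (hv : Continuous v) (z : ℝ × ℝ) (r0 A E : ℝ) (h0 : 0 < r0)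
    (h1 : r0 ≤ 1) (hA : 0 ≤ A) (hE : 0 ≤ E)
    (hosc : ∀ r, 0 < r → r ≤ r0 → (⨍ p in pCube2 z r, |v p - ⨍ q in pCube2 z r, v q|) ≤ A)
    (hIbd : ∀ r, 0 < r → r ≤ r0 → (∫ p in pCube2 z r, |v p|) ≤ E) (r : ℝ) (hr : 0 < r)
    (hr0 : r ≤ r0) : r * |⨍ q in pCube2 z r, v q| ≤ E / r0 ^ 2 + 16 * A := by
  obtain ⟨n, hn⟩ := pow_unbounded_of_one_lt (r0 / r) (by norm_num : (1 : ℝ) < 2)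
  rw [div_lt_iff₀ hr] at hn
  refine telescope v hv z r0 A E h0 h1 hA hE hosc hIbd n r hr hr0 ?_
  rw [pow_succ]
  nlinarith [pow_pos (by norm_num : (0 : ℝ) < 2) n, mul_pos (pow_pos (by norm_num : (0 : ℝ) < 2) n) hr]

/-- Clamping to the closed box. -/
def clampFn (T : ℝ) (u : ℝ × ℝ → ℝ) : ℝ × ℝ → ℝ := fun p =>
  u (max 0 (min 1 p.1), max 0 (min T p.2))

lemma clampFn_cont (T : ℝ) (hT : 0 < T) (u : ℝ × ℝ → ℝ)
    (hu : ContinuousOn u (Set.Icc (0 : ℝ) 1 ×ˢ Set.Icc (0 : ℝ) T)) : Continuous (clampFn T u) := by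
  refine hu.comp_continuous (by fun_prop) (fun p => ?_)
  refine ⟨⟨le_max_left _ _, max_le zero_le_one (min_le_left _ _)⟩,
    ⟨le_max_left _ _, max_le hT.le (min_le_left _ _)⟩⟩

lemma clampFn_eq (T : ℝ) (u : ℝ × ℝ → ℝ) (p : ℝ × ℝ)
    (hp : p ∈ Set.Icc (0 : ℝ) 1 ×ˢ Set.Icc (0 : ℝ) T) : clampFn T u p = u p := by
  obtain ⟨⟨h1, h2⟩, h3, h4⟩ := hp
  unfold clampFn
  rw [min_eq_right h2, min_eq_right h4, max_eq_right h1, max_eq_right h3]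

lemma Omega_sub (T : ℝ) : Omega T ⊆ Set.Icc (0 : ℝ) 1 ×ˢ Set.Icc (0 : ℝ) T :=
  Set.prod_mono Set.Ioo_subset_Icc_self Set.Ioo_subset_Icc_self

lemma oscSet_congr (O : Set (ℝ × ℝ)) (u w : ℝ × ℝ → ℝ) (h : ∀ p ∈ O, u p = w p) :
    oscSet2 O u = oscSet2 O w := by
  ext v
  refine exists_congr fun z => exists_congr fun r => and_congr_right fun hr =>
    and_congr_right fun hs => ?_
  have e1 : (⨍ q in pCube2 z r, u q) = ⨍ q in pCube2 z r, w q := by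
    have e : (∫ q in pCube2 z r, u q) = ∫ q in pCube2 z r, w q :=
      setIntegral_congr_fun (pCube2_meas z r hr) (fun p hp => h p (hs hp))
    rw [avg_eq _ z r hr, avg_eq _ z r hr, e]
  have e2 : (⨍ p in pCube2 z r, |u p - ⨍ q in pCube2 z r, u q|) =
      ⨍ p in pCube2 z r, |w p - ⨍ q in pCube2 z r, w q| := by
    have e : (∫ p in pCube2 z r, |u p - ⨍ q in pCube2 z r, w q|) =
        ∫ p in pCube2 z r, |w p - ⨍ q in pCube2 z r, w q| :=
      setIntegral_congr_fun (pCube2_meas z r hr) (fun p hp => by simp only [h p (hs hp)])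
    rw [e1, avg_eq (fun p => |u p - ⨍ q in pCube2 z r, w q|) z r hr, e,
      avg_eq (fun p => |w p - ⨍ q in pCube2 z r, w q|) z r hr]
  rw [e2]

lemma uextZ_clamp (T : ℝ) (hT : 0 < T) (u : ℝ × ℝ → ℝ) : uextZ T u = uextZ T (clampFn T u) := by
  refine Set.indicator_congr fun p hp => ?_
  have hm : ∀ k : ℝ, 0 < k → k ≤ 1 → clampFn T u (foldG T k p) = u (foldG T k p) := by
    intro k hk hk1
    refine clampFn_eq T u _ ⟨foldMap_mem 1 k _ one_pos hk hk1 (by rw [mul_one]; exact hp.1),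
        foldMap_mem T 1 _ hT one_pos le_rfl hp.2⟩
  rw [uext_eq, uext_eq, hm 1 one_pos le_rfl, hm (1 / 2) (by norm_num) (by norm_num)]

/-- The estimate for globally continuous functions. -/
lemma main_aux (T : ℝ) (hT : 0 < T) (Ψ : ℝ × ℝ → ℝ) (hΨc : Continuous Ψ)
    (hΨnonneg : ∀ p, 0 ≤ Ψ p) (hΨle : ∀ p, Ψ p ≤ 1) (D : ℝ) (hD : 0 ≤ D)
    (hlip : ∀ p q, |Ψ p - Ψ q| ≤ D * dist p q)
    (hΨzero : ∀ p ∉ Set.Ioo (-(3 : ℝ) / 4) (7 / 4) ×ˢ Set.Ioo (-3 * T / 4) (7 * T / 4),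
      Ψ p = 0) (r0 : ℝ) (hr0 : 0 < r0) (hr1 : r0 ≤ 1 / 8) (hrT : r0 ≤ T / 8)
    (w : ℝ × ℝ → ℝ) (hw : Continuous w) (hB : BddAbove (oscSet2 (Omega T) w))
    (B L : ℝ) (hBe : B = pBMO2 (Omega T) w) (hLe : L = ∫ p in Omega T, |w p|)
    (hB0 : 0 ≤ B) (hL0 : 0 ≤ L) (z : ℝ × ℝ) (r : ℝ) (hr : 0 < r) :
    (⨍ p in pCube2 z r, |Ψ p * uextZ T w p - ⨍ q in pCube2 z r, Ψ q * uextZ T w q|) ≤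
      2 * (175 * L / (4 * r0 ^ 3)) +
        2 * (350 * B + D * (175 * L / r0 ^ 2 + 16 * (350 * B))) := by
  obtain ⟨hvc, hvL⟩ := uext_props T hT w hw
  rw [← hLe] at hvL
  have hmO : MeasurableSet (OmegaTilde T) := measurableSet_Ioo.prod measurableSet_Ioo
  have hout : ∀ p ∉ OmegaTilde T, Ψ p = 0 := by
    intro p hp
    refine hΨzero p fun hq => hp ?_
    obtain ⟨⟨h1, h2⟩, h3, h4⟩ := hq
    exact ⟨⟨by linarith, by linarith⟩, by linarith, by linarith⟩
  have hfe : (fun p => Ψ p * uextZ T w p) = fun p => Ψ p * uext T w p := by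
    ext p
    by_cases hp : p ∈ OmegaTilde T
    · unfold uextZ; rw [Set.indicator_of_mem hp]
    · rw [hout p hp]; ring
  have hfe' : ∀ p, Ψ p * uextZ T w p = Ψ p * uext T w p := fun p => congrFun hfe p
  simp only [hfe']
  set v := uext T w with hv
  have hfc : Continuous (fun p => Ψ p * v p) := hΨc.mul hvc
  have p1 : 0 ≤ 2 * (175 * L / (4 * r0 ^ 3)) := by positivity
  have p2 : 0 ≤ 2 * (350 * B + D * (175 * L / r0 ^ 2 + 16 * (350 * B))) := by positivity
  have hV : 0 < 4 * r ^ 3 := by positivity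
  have hvO : IntegrableOn (fun p => |v p|) (OmegaTilde T) := box_int _ (by fun_prop) _ _ _ _
  by_cases hbig : r0 < r
  · -- large cubes
    have h := osc_le _ hfc z r hr 0
    simp only [sub_zero] at h
    have hI : (∫ p in pCube2 z r, |Ψ p * v p|) ≤ 175 * L := by
      refine le_trans ?_ hvL
      have a1 : (∫ p in pCube2 z r, |Ψ p * v p|) ≤
          ∫ p in pCube2 z r, (OmegaTilde T).indicator (fun p => |v p|) p := by
        refine setIntegral_mono (cube_int _ (by fun_prop) z r hr)
          ((integrable_indicator_iff hmO).2 hvO).integrableOn (fun p => ?_)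
        simp only
        by_cases hp : p ∈ OmegaTilde T
        · rw [Set.indicator_of_mem hp, abs_mul, abs_of_nonneg (hΨnonneg p)]
          exact mul_le_of_le_one_left (abs_nonneg _) (hΨle p)
        · rw [Set.indicator_of_notMem hp, hout p hp]; simp
      refine a1.trans ?_
      rw [← integral_indicator hmO]
      exact setIntegral_le_integral ((integrable_indicator_iff hmO).2 hvO)
        (Filter.Eventually.of_forall fun p => Set.indicator_nonneg (fun _ _ => abs_nonneg _) p)
    have h2 : (4 * r ^ 3)⁻¹ * (∫ p in pCube2 z r, |Ψ p * v p|) ≤ 175 * L / (4 * r0 ^ 3) := by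
      rw [inv_mul_eq_div]
      gcongr
    linarith
  push Not at hbig
  by_cases hmeet : ∀ p ∈ pCube2 z r, Ψ p = 0
  · have h := osc_le _ hfc z r hr 0
    have : (∫ p in pCube2 z r, |Ψ p * v p - 0|) = 0 := by
      rw [setIntegral_congr_fun (g := fun _ => (0 : ℝ)) (pCube2_meas z r hr)
        (fun p hp => by simp [hmeet p hp])]
      simp
    rw [this] at h
    linarith
  push Not at hmeet
  obtain ⟨p0, hp0, hp0'⟩ := hmeet
  have hpZ : p0 ∈ Set.Ioo (-(3 : ℝ) / 4) (7 / 4) ×ˢ Set.Ioo (-3 * T / 4) (7 * T / 4) := by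
    by_contra hc; exact hp0' (hΨzero p0 hc)
  rw [pCube2_eq z r hr] at hp0
  obtain ⟨⟨a1, a2⟩, a3, a4⟩ := hp0
  obtain ⟨⟨b1, b2⟩, b3, b4⟩ := hpZ
  have sqb : ∀ s, 0 < s → s ≤ r0 → s ^ 2 ≤ T / 64 := by
    intro s hs hs0; nlinarith
  have hsub : ∀ s, 0 < s → s ≤ r0 → pCube2 z s ⊆ OmegaTilde T := by
    intro s hs hs0
    have q1 := sqb s hs hs0
    have q2 := sqb r hr hbig
    rw [pCube2_eq z s hs]
    rintro p ⟨⟨c1, c2⟩, c3, c4⟩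
    exact ⟨⟨by linarith, by linarith⟩, by linarith, by linarith⟩
  have hosc : ∀ s, 0 < s → s ≤ r0 →
      (⨍ p in pCube2 z s, |v p - ⨍ q in pCube2 z s, v q|) ≤ 350 * B := by
    intro s hs hs0
    rw [hBe]
    have q1 := sqb s hs hs0
    exact uext_osc T hT w hw hB z s hs (by linarith) (by linarith) (hsub s hs hs0)
  have hIbd : ∀ s, 0 < s → s ≤ r0 → (∫ p in pCube2 z s, |v p|) ≤ 175 * L := by
    intro s hs hs0
    refine le_trans ?_ hvL
    exact setIntegral_mono_set hvO (Filter.Eventually.of_forall fun _ => abs_nonneg _)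
        (Filter.Eventually.of_forall (hsub s hs hs0))
  have htel := telescope' v hvc z r0 (350 * B) (175 * L) hr0 (by linarith) (by positivity)
    (by positivity) hosc hIbd r hr hbig
  have ho := hosc r hr hbig
  set c := ⨍ q in pCube2 z r, v q with hc
  have h := osc_le _ hfc z r hr (Ψ z * c)
  have hle : (∫ p in pCube2 z r, |Ψ p * v p - Ψ z * c|) ≤
      ∫ p in pCube2 z r, (|v p - c| + D * r * |c|) := by
    refine setIntegral_mono_on (cube_int _ (by fun_prop) z r hr) (cube_int _ (by fun_prop) z r hr)
      (pCube2_meas z r hr) (fun p hp => ?_)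
    rw [show Ψ p * v p - Ψ z * c = Ψ p * (v p - c) + (Ψ p - Ψ z) * c by ring]
    refine (abs_add_le _ _).trans (add_le_add ?_ ?_)
    · rw [abs_mul, abs_of_nonneg (hΨnonneg p)]
      exact mul_le_of_le_one_left (abs_nonneg _) (hΨle p)
    · rw [abs_mul]
      refine mul_le_mul_of_nonneg_right ((hlip p z).trans ?_) (abs_nonneg _)
      refine mul_le_mul_of_nonneg_left ?_ hD
      rw [pCube2_eq z r hr] at hp
      obtain ⟨⟨c1, c2⟩, c3, c4⟩ := hp
      have : r ^ 2 ≤ r := by nlinarith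
      rw [Prod.dist_eq, Real.dist_eq, Real.dist_eq]
      refine max_le ?_ ?_ <;> rw [abs_le] <;> constructor <;> linarith
  rw [integral_add (cube_int _ (by fun_prop) z r hr) (cube_int _ (by fun_prop) z r hr),
    cube_const _ z r hr] at hle
  have h2 := mul_le_mul_of_nonneg_left hle (inv_pos.2 hV).le
  rw [mul_add, inv_mul_cancel_left₀ hV.ne'] at h2
  rw [avg_eq _ z r hr] at ho
  have h3 := mul_le_mul_of_nonneg_left htel hD
  linarith

/-- **Estimate (3.14)**: `‖Ψũ‖_{BMOₚ(ℝ²)} ≤ C (‖u‖_{BMOₚ(Ω_T)} + ‖u‖_{L¹(Ω_T)})`, where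
`Ψ` is a cut-off equal to `1` on `Z₁ = (-1/4,5/4) × (-T/4,5T/4)` and vanishing outside
`Z₂ = (-3/4,7/4) × (-3T/4,7T/4)`, and `ũ` is the reflection extension of `u` extended by
`0` outside `Ω̃_T`. -/
theorem bmo_estimate_of_cutoff_extension (T : ℝ) (hT : 0 < T) (Ψ : ℝ × ℝ → ℝ)
    (hΨsmooth : ContDiff ℝ (⊤ : ℕ∞) Ψ) (hΨsupp : HasCompactSupport Ψ)
    (hΨnonneg : ∀ p, 0 ≤ Ψ p) (hΨle : ∀ p, Ψ p ≤ 1)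
    (hΨone : ∀ p ∈ Set.Ioo (-(1 : ℝ) / 4) (5 / 4) ×ˢ Set.Ioo (-T / 4) (5 * T / 4), Ψ p = 1)
    (hΨzero : ∀ p ∉ Set.Ioo (-(3 : ℝ) / 4) (7 / 4) ×ˢ Set.Ioo (-3 * T / 4) (7 * T / 4),
      Ψ p = 0) :
    ∃ C : ℝ, 0 < C ∧ ∀ u : ℝ × ℝ → ℝ,
      ContinuousOn u (Set.Icc (0 : ℝ) 1 ×ˢ Set.Icc (0 : ℝ) T) →
      BddAbove (oscSet2 (Omega T) u) →
      pBMO2 Set.univ (fun p => Ψ p * uextZ T u p) ≤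
        C * (pBMO2 (Omega T) u + ∫ p in Omega T, |u p|) := by
  have hΨc : Continuous Ψ := hΨsmooth.continuous
  obtain ⟨D, hD⟩ := hΨsmooth.lipschitzWith_of_hasCompactSupport hΨsupp (by simp)
  have hlip : ∀ p q, |Ψ p - Ψ q| ≤ (D : ℝ) * dist p q := by
    intro p q
    have := hD.dist_le_mul p q
    rwa [Real.dist_eq] at this
  have hD0 : (0 : ℝ) ≤ D := D.2
  obtain ⟨r0, hr0, hr1, hrT⟩ : ∃ r0 : ℝ, 0 < r0 ∧ r0 ≤ 1 / 8 ∧ r0 ≤ T / 8 :=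
    ⟨min (1 / 8) (T / 8), by positivity, min_le_left _ _, min_le_right _ _⟩
  set c1 : ℝ := 2 * (175 / (4 * r0 ^ 3)) + 2 * (D * (175 / r0 ^ 2)) with hc1
  set c2 : ℝ := 2 * (350 + D * (16 * 350)) with hc2
  have hc1p : 0 < c1 := by positivity
  have hc2p : 0 < c2 := by positivity
  refine ⟨c1 + c2, by positivity, fun u hu hB => ?_⟩
  have heq : ∀ p ∈ Omega T, u p = clampFn T u p := fun p hp =>
    (clampFn_eq T u p (Omega_sub T hp)).symm
  have hmO : MeasurableSet (Omega T) := measurableSet_Ioo.prod measurableSet_Ioo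
  have e1 := oscSet_congr (Omega T) u (clampFn T u) heq
  have e2 : pBMO2 (Omega T) u = pBMO2 (Omega T) (clampFn T u) := by unfold pBMO2; rw [e1]
  have e3 : (∫ p in Omega T, |u p|) = ∫ p in Omega T, |clampFn T u p| :=
    setIntegral_congr_fun hmO (fun p hp => by simp only [heq p hp])
  rw [e1] at hB
  rw [e2, e3, uextZ_clamp T hT u]
  have hw := clampFn_cont T hT u hu
  set w := clampFn T u
  set B := pBMO2 (Omega T) w with hBe
  set L := ∫ p in Omega T, |w p| with hLe
  have hL0 : 0 ≤ L := integral_nonneg fun _ => abs_nonneg _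
  have hB0 : 0 ≤ B := by
    refine Real.sSup_nonneg ?_
    rintro x ⟨z, r, hr, -, rfl⟩
    rw [avg_eq _ z r hr]
    exact mul_nonneg (by positivity) (integral_nonneg fun _ => abs_nonneg _)
  refine Real.sSup_le ?_ (by positivity)
  rintro x ⟨z, r, hr, -, rfl⟩
  refine (main_aux T hT Ψ hΨc hΨnonneg hΨle D hD0 hlip hΨzero r0 hr0 hr1 hrT w hw hB B L hBe hLe
    hB0 hL0 z r hr).trans ?_
  have : 2 * (175 * L / (4 * r0 ^ 3)) +
        2 * (350 * B + D * (175 * L / r0 ^ 2 + 16 * (350 * B))) = c1 * L + c2 * B := by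
    rw [hc1, hc2]; ring
  rw [this]
  nlinarith [mul_nonneg hc1p.le hB0, mul_nonneg hc2p.le hL0]

end
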